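/- Fix a field k and an integer n ≥ 0. The group K_0(V_k^{(n,n-1)}) is a free abelian group with one basis element for each class in B_n; explicitly, the class [X] of a variety X of dimension at most n equals the sum, over the n-dimensional irreducible components of X, of the basis elements corresponding to their birational isomorphism classes. In particular, K_0(V_k^{(n,n-1)}) is isomorphic to the direct sum of copies of ℤ indexed by B_n. -/

import Mathlib

open AlgebraicGeometry CategoryTheory CategoryTheory.Limits

noncomputable section

universe u

/-- A variety over a field `k`: a reduced separated scheme of finite type over `Spec k`. -/
structure Variety (k : Type u) [Field k] : Type (u + 1) where
  /-- the underlying scheme -/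
  toScheme : Scheme.{u}
  /-- the structure morphism to `Spec k` -/
  str : toScheme ⟶ Spec (CommRingCat.of k)
  reduced : IsReduced toScheme
  separated : IsSeparated str
  locallyOfFiniteType : LocallyOfFiniteType str
  quasiCompact : QuasiCompact str

namespace Variety

variable {k : Type u} [Field k]

/-- The dimension of a variety, i.e. the Krull dimension of its underlying space. -/
def dim (V : Variety k) : WithBot ℕ∞ := topologicalKrullDim V.toScheme

/-- `W` together with (implicitly) its two projections is a product of `X` and `Y`
over `k`, i.e. `W ≅ X ×ₖ Y`. -/
def IsProductOf (W X Y : Variety k) : Prop :=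
  ∃ e : W.toScheme ≅ Limits.pullback X.str Y.str,
    e.hom ≫ Limits.pullback.fst X.str Y.str ≫ X.str = W.str

/-- `A` is the affine line `𝔸¹` over `k`. -/
def IsAffLine (A : Variety k) : Prop :=
  ∃ e : A.toScheme ≅ Spec (CommRingCat.of (Polynomial k)),
    e.hom ≫ Spec.map (CommRingCat.ofHom (algebraMap k (Polynomial k))) = A.str

/-- `A` is affine `r`-space `𝔸^r` over `k`. -/
def IsAffSpace (r : ℕ) (A : Variety k) : Prop :=
  ∃ e : A.toScheme ≅ Spec (CommRingCat.of (MvPolynomial (Fin r) k)),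
    e.hom ≫ Spec.map (CommRingCat.ofHom (algebraMap k (MvPolynomial (Fin r) k))) = A.str

/-- A variety is smooth if its structure morphism is smooth. -/
def IsSmoothVar (V : Variety k) : Prop := IsSmooth V.str

/-- Projective `N`-space over `k`, as the `Proj` of a polynomial ring. -/
def ProjSpace (k : Type u) [Field k] (N : ℕ) : Scheme.{u} :=
  letI := MvPolynomial.gradedAlgebra (σ := Fin (N + 1)) (R := k)
  Proj (MvPolynomial.homogeneousSubmodule (Fin (N + 1)) k)

/-- The structure morphism of projective `N`-space over `k`. -/
def ProjSpace.str (k : Type u) [Field k] (N : ℕ) :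
    ProjSpace k N ⟶ Spec (CommRingCat.of k) :=
  letI := MvPolynomial.gradedAlgebra (σ := Fin (N + 1)) (R := k)
  Proj.toSpecZero (MvPolynomial.homogeneousSubmodule (Fin (N + 1)) k) ≫
    Spec.map (CommRingCat.ofHom
      (algebraMap k (MvPolynomial.homogeneousSubmodule (Fin (N + 1)) k 0)))

/-- `P` is projective `N`-space over `k`, as a variety. -/
def IsProjSpaceVar (N : ℕ) (P : Variety k) : Prop :=
  ∃ e : P.toScheme ≅ ProjSpace k N, e.hom ≫ ProjSpace.str k N = P.str

/-- A variety is projective if it admits a closed immersion into some `ℙ^N` over `k`. -/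
def IsProjectiveVar (V : Variety k) : Prop :=
  ∃ (N : ℕ) (i : V.toScheme ⟶ ProjSpace k N),
    IsClosedImmersion i ∧ i ≫ ProjSpace.str k N = V.str

/-- `X` and `Y` are birationally isomorphic over `k`:
some dense open subvarieties are isomorphic over `k`. -/
def BirEquiv (X Y : Variety k) : Prop :=
  ∃ (U : X.toScheme.Opens) (V : Y.toScheme.Opens),
    Dense (U : Set X.toScheme) ∧ Dense (V : Set Y.toScheme) ∧
    ∃ e : U.toScheme ≅ V.toScheme, e.hom ≫ V.ι ≫ Y.str = U.ι ≫ X.str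

/-- `X` and `Y` are stably birational: `X × 𝔸^r` and `Y × 𝔸^r` are birationally
isomorphic for some `r ≥ 0`. -/
def StablyBirational (X Y : Variety k) : Prop :=
  ∃ (r : ℕ) (A XA YA : Variety k),
    IsAffSpace r A ∧ IsProductOf XA X A ∧ IsProductOf YA Y A ∧ BirEquiv XA YA

/-- `X` and `Y` are piecewise isomorphic: they admit finite partitions into locally
closed subvarieties which are isomorphic over `k` piece by piece. -/
def PiecewiseIso (X Y : Variety k) : Prop :=
  ∃ (m : ℕ) (P Q : Fin m → Variety k)
    (f : ∀ i, (P i).toScheme ⟶ X.toScheme) (g : ∀ i, (Q i).toScheme ⟶ Y.toScheme),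
    (∀ i, IsImmersion (f i)) ∧ (∀ i, IsImmersion (g i)) ∧
    (∀ i, f i ≫ X.str = (P i).str) ∧ (∀ i, g i ≫ Y.str = (Q i).str) ∧
    (∀ i j, i ≠ j → Disjoint (Set.range (f i).base) (Set.range (f j).base)) ∧
    (∀ i j, i ≠ j → Disjoint (Set.range (g i).base) (Set.range (g j).base)) ∧
    (⋃ i, Set.range (f i).base) = Set.univ ∧
    (⋃ i, Set.range (g i).base) = Set.univ ∧
    ∀ i, ∃ e : (P i).toScheme ≅ (Q i).toScheme, e.hom ≫ (Q i).str = (P i).str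

/-- The set of generators of the scissor-type relations among varieties of the class `P`:
`[X] = [X']` for `X ≅ X'` over `k`, and `[X] = [Y] + [U]` whenever `Y` is a closed
subvariety of `X` and `U` is its open complement. -/
def cutRel (P : Variety k → Prop) : Set (FreeAbelianGroup {V : Variety k // P V}) :=
  {a | (∃ X Y : {V : Variety k // P V},
          (∃ e : X.1.toScheme ≅ Y.1.toScheme, e.hom ≫ Y.1.str = X.1.str) ∧
          a = FreeAbelianGroup.of X - FreeAbelianGroup.of Y) ∨
       (∃ (X Y U : {V : Variety k // P V}) (i : Y.1.toScheme ⟶ X.1.toScheme)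
          (j : U.1.toScheme ⟶ X.1.toScheme),
          IsClosedImmersion i ∧ IsOpenImmersion j ∧
          i ≫ X.1.str = Y.1.str ∧ j ≫ X.1.str = U.1.str ∧
          Set.range j.base = (Set.range i.base)ᶜ ∧
          a = FreeAbelianGroup.of X - FreeAbelianGroup.of Y - FreeAbelianGroup.of U)}

/-- The Grothendieck group of the class of varieties satisfying `P`: the free abelian
group on (isomorphism classes of) varieties satisfying `P`, modulo the relations
`[X] = [Y] + [X ∖ Y]` for closed subvarieties `Y` of `X`. -/
def K0 (k : Type u) [Field k] (P : Variety k → Prop) : Type (u + 1) :=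
  FreeAbelianGroup {V : Variety k // P V} ⧸ AddSubgroup.closure (cutRel P)

instance (P : Variety k → Prop) : AddCommGroup (K0 k P) :=
  QuotientAddGroup.Quotient.addCommGroup _

/-- The class of a variety in the Grothendieck group. -/
def K0.cls {P : Variety k → Prop} (V : Variety k) (hV : P V) : K0 k P :=
  QuotientAddGroup.mk (FreeAbelianGroup.of ⟨V, hV⟩)

/-- `K_0(V_k^{(n)})`: the Grothendieck group of varieties of dimension at most `n`. -/
abbrev K0le (k : Type u) [Field k] (n : ℕ) : Type (u + 1) :=
  K0 k (fun V => V.dim ≤ (n : WithBot ℕ∞))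

/-- `K_0[V_k]` (as an abelian group): the Grothendieck group of all varieties over `k`. -/
abbrev K0Var (k : Type u) [Field k] : Type (u + 1) := K0 k (fun _ => True)

/-- The class of a variety in `K_0[V_k]`. -/
def K0Var.cls (V : Variety k) : K0Var k := K0.cls V trivial

/-- `K_0(V_k^{(n,n-1)})`: the Grothendieck group of varieties of dimension at most `n`,
where moreover the class of every variety of dimension `< n` is set to `0`. -/
def K0graded (k : Type u) [Field k] (n : ℕ) : Type (u + 1) :=
  FreeAbelianGroup {V : Variety k // V.dim ≤ (n : WithBot ℕ∞)} ⧸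
    AddSubgroup.closure (cutRel (fun V => V.dim ≤ (n : WithBot ℕ∞)) ∪
      {a | ∃ X : {V : Variety k // V.dim ≤ (n : WithBot ℕ∞)},
        X.1.dim < (n : WithBot ℕ∞) ∧ a = FreeAbelianGroup.of X})

instance (n : ℕ) : AddCommGroup (K0graded k n) :=
  QuotientAddGroup.Quotient.addCommGroup _

/-- The class of a variety in `K_0(V_k^{(n,n-1)})`. -/
def K0graded.cls (n : ℕ) (V : Variety k) (hV : V.dim ≤ (n : WithBot ℕ∞)) : K0graded k n :=
  QuotientAddGroup.mk (FreeAbelianGroup.of ⟨V, hV⟩)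

/-- `x ∈ K_0(V_k^{(b)})` lies in the image of multiplication by `L = [𝔸¹]`, viewed as the
map `K_0(V_k^{(a)}) → K_0(V_k^{(b)})` sending `[Z]` to `[Z × 𝔸¹]`. -/
def InMulLImage (a b : ℕ) (x : K0le k b) : Prop :=
  ∃ (m : ℕ) (c : Fin m → ℤ) (Z W : Fin m → Variety k)
    (_ : ∀ i, (Z i).dim ≤ (a : WithBot ℕ∞)) (hW : ∀ i, (W i).dim ≤ (b : WithBot ℕ∞)),
    (∀ i, ∃ A : Variety k, IsAffLine A ∧ IsProductOf (W i) (Z i) A) ∧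
    x = ∑ i, c i • K0.cls (W i) (hW i)

/-- `L · χ = 0` in `K_0[V_k]`: there is a representation `χ = ∑ cᵢ [Zᵢ]` with
`∑ cᵢ [Zᵢ × 𝔸¹] = 0`. -/
def MulLZero (χ : K0Var k) : Prop :=
  ∃ (m : ℕ) (c : Fin m → ℤ) (Z W : Fin m → Variety k),
    (∀ i, ∃ A : Variety k, IsAffLine A ∧ IsProductOf (W i) (Z i) A) ∧
    χ = ∑ i, c i • K0Var.cls (Z i) ∧
    (0 : K0Var k) = ∑ i, c i • K0Var.cls (W i)

/-- The subgroup of `K_0[V_k]` of multiples of `L`, i.e. the ideal generated by `L`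
viewed as an additive subgroup. -/
def LMultiples (k : Type u) [Field k] : AddSubgroup (K0Var k) :=
  AddSubgroup.closure
    {y | ∃ (m : ℕ) (c : Fin m → ℤ) (Z W : Fin m → Variety k),
      (∀ i, ∃ A : Variety k, IsAffLine A ∧ IsProductOf (W i) (Z i) A) ∧
      y = ∑ i, c i • K0Var.cls (W i)}

/-- `Z` realizes the closed complement `X ∖ U` of the open `U ⊆ X` as a variety. -/
def IsComplementOf (Z X : Variety k) (U : X.toScheme.Opens) : Prop :=
  ∃ i : Z.toScheme ⟶ X.toScheme, IsClosedImmersion i ∧ i ≫ X.str = Z.str ∧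
    Set.range i.base = (U : Set X.toScheme)ᶜ

/-- The birational isomorphism between `n`-dimensional varieties `X ⇢ Y` represented by
an isomorphism `U → V` of open subvarieties is convenient:
`[X ∖ U] - [Y ∖ V]` lies in the image of `·L : K_0(V_k^{(n-2)}) → K_0(V_k^{(n-1)})`. -/
def ConvenientRep (n : ℕ) (X Y : Variety k) (U : X.toScheme.Opens)
    (V : Y.toScheme.Opens) : Prop :=
  ∀ (ZX ZY : Variety k) (hZX : ZX.dim ≤ ((n - 1 : ℕ) : WithBot ℕ∞))
    (hZY : ZY.dim ≤ ((n - 1 : ℕ) : WithBot ℕ∞)),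
    IsComplementOf ZX X U → IsComplementOf ZY Y V →
    InMulLImage (n - 2) (n - 1) (K0.cls ZX hZX - K0.cls ZY hZY)

/-- A field `k` is convenient if every birational isomorphism between smooth projective
varieties over `k` is convenient. -/
def ConvenientField (k : Type u) [Field k] : Prop :=
  ∀ (n : ℕ) (X Y : Variety k), IsSmoothVar X → IsSmoothVar Y →
    IsProjectiveVar X → IsProjectiveVar Y →
    IrreducibleSpace X.toScheme → IrreducibleSpace Y.toScheme →
    X.dim = (n : WithBot ℕ∞) → Y.dim = (n : WithBot ℕ∞) →
    ∀ (U : X.toScheme.Opens) (V : Y.toScheme.Opens),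
      Dense (U : Set X.toScheme) → Dense (V : Set Y.toScheme) →
      ∀ e : U.toScheme ≅ V.toScheme, e.hom ≫ V.ι ≫ Y.str = U.ι ≫ X.str →
      ConvenientRep n X Y U V

end Variety
namespace Variety

variable {k : Type u} [Field k]

/-- The type of birational isomorphism classes of irreducible `n`-dimensional
varieties over `k` (the set `B_n`). -/
def BirClass (k : Type u) [Field k] (n : ℕ) : Type (u + 1) :=
  Quot (fun X Y : {V : Variety k // IrreducibleSpace V.toScheme ∧
    V.dim = (n : WithBot ℕ∞)} => BirEquiv X.1 Y.1)

/-- The type of stable birational isomorphism classes of irreducible varieties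
over `k` (the set `SB`). -/
def StableBirClass (k : Type u) [Field k] : Type (u + 1) :=
  Quot (fun X Y : {V : Variety k // IrreducibleSpace V.toScheme} =>
    StablyBirational X.1 Y.1)

/-- The family of varieties `C` together with the closed immersions `f i` realizes
exactly the `n`-dimensional irreducible components of `X`, each exactly once. -/
def RealizesComponents (n : ℕ) (X : Variety k) (m : ℕ)
    (C : Fin m → Variety k) (f : ∀ i, (C i).toScheme ⟶ X.toScheme) : Prop :=
  (∀ i, IsClosedImmersion (f i)) ∧ (∀ i, f i ≫ X.str = (C i).str) ∧
  Function.Injective (fun i => Set.range (f i).base) ∧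
  (Set.range fun i => Set.range (f i).base) =
    {S | S ∈ irreducibleComponents X.toScheme ∧
      topologicalKrullDim S = (n : WithBot ℕ∞)}

/-- `p : E ⟶ Z` is a Zariski-locally trivial `ℙ^ℓ`-bundle: every point of `Z` has an
open neighbourhood `W` such that `p⁻¹(W)` is isomorphic over `W` to `W × ℙ^ℓ`. -/
def IsProjBundle (ℓ : ℕ) {E Z : Variety k} (p : E.toScheme ⟶ Z.toScheme) : Prop :=
  ∀ z : Z.toScheme, ∃ W : Z.toScheme.Opens, z ∈ W ∧
    ∃ e : (p ⁻¹ᵁ W).toScheme ≅ Limits.pullback (W.ι ≫ Z.str) (ProjSpace.str k ℓ),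
      e.hom ≫ Limits.pullback.fst (W.ι ≫ Z.str) (ProjSpace.str k ℓ) = p ∣_ W

/-- `X` (of dimension `d`) has stable dimensional complexity `m`: `m` is the minimal
integer such that `X` is stably birational to `X' × 𝔸^(d-m)` for some variety `X'` of
dimension `m`. -/
def HasStableDimComplexity (X : Variety k) (d m : ℕ) : Prop :=
  (∃ X' A P : Variety k, X'.dim = (m : WithBot ℕ∞) ∧ IsAffSpace (d - m) A ∧
      IsProductOf P X' A ∧ StablyBirational X P) ∧
  ∀ j < m, ¬ ∃ X' A P : Variety k, X'.dim = (j : WithBot ℕ∞) ∧ IsAffSpace (d - j) A ∧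
      IsProductOf P X' A ∧ StablyBirational X P

/-- Generators of the covering relations among smooth varieties: `[X] = ∑ᵢ [Xᵢ]`
whenever `{Xᵢ → X}` is a finite family of locally closed embeddings of smooth
varieties with pairwise disjoint images whose union is all of `X`. -/
def smCutRel (k : Type u) [Field k] :
    Set (FreeAbelianGroup {V : Variety k // IsSmoothVar V}) :=
  {a | ∃ (X : {V : Variety k // IsSmoothVar V}) (m : ℕ)
        (P : Fin m → {V : Variety k // IsSmoothVar V})
        (f : ∀ i, (P i).1.toScheme ⟶ X.1.toScheme),
        (∀ i, IsImmersion (f i)) ∧ (∀ i, f i ≫ X.1.str = (P i).1.str) ∧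
        (∀ i j, i ≠ j → Disjoint (Set.range (f i).base) (Set.range (f j).base)) ∧
        (⋃ i, Set.range (f i).base) = Set.univ ∧
        a = FreeAbelianGroup.of X - ∑ i, FreeAbelianGroup.of (P i)}

/-- `K_0(V_k^{sm})`: the Grothendieck group of smooth varieties over `k`, with the
covering relations. -/
def K0sm (k : Type u) [Field k] : Type (u + 1) :=
  FreeAbelianGroup {V : Variety k // IsSmoothVar V} ⧸ AddSubgroup.closure (smCutRel k)

instance : AddCommGroup (K0sm k) := QuotientAddGroup.Quotient.addCommGroup _

/-- The class of a smooth variety in `K_0(V_k^{sm})`. -/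
def K0sm.cls (V : Variety k) (hV : IsSmoothVar V) : K0sm k :=
  QuotientAddGroup.mk (FreeAbelianGroup.of ⟨V, hV⟩)

end Variety
namespace Variety

variable {k : Type u} [Field k]

/-- The class of a variety in `K_0(V_k^{(n)})`. -/
def K0le.cls (n : ℕ) (V : Variety k) (hV : V.dim ≤ (n : WithBot ℕ∞)) : K0le k n :=
  K0.cls V hV

end Variety

open Variety

theorem aux_dim_integral {R S : Type*} [CommRing R] [CommRing S] [Algebra R S]
    [Algebra.IsIntegral R S] (hinj : Function.Injective (algebraMap R S)) :
    ringKrullDim S = ringKrullDim R := by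
  apply le_antisymm
  · refine Order.krullDim_le_of_strictMono (PrimeSpectrum.comap (algebraMap R S)) ?_
    intro p q h
    exact Ideal.IsIntegral.comap_lt_comap (I := p.asIdeal) (J := q.asIdeal) h
  · refine iSup_le fun l => ?_
    have : FaithfulSMul R S := (faithfulSMul_iff_algebraMap_injective R S).2 hinj
    obtain ⟨Q, -, hQ, hQ2⟩ := Ideal.exists_ideal_over_prime_of_isIntegral
      (RelSeries.head l).asIdeal (⊥ : Ideal S) (by
        intro x hx
        rw [Ideal.mem_comap, Ideal.mem_bot] at hx
        rw [(map_eq_zero_iff _ hinj).1 hx]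
        exact zero_mem _)
    have : Q.LiesOver (RelSeries.head l).asIdeal := ⟨hQ2.symm⟩
    obtain ⟨L, hL, -⟩ := Ideal.exists_ltSeries_of_hasGoingUp l Q
    rw [← hL]
    exact le_iSup (fun l : LTSeries (PrimeSpectrum S) => (l.length : WithBot ℕ∞)) L

theorem aux_dim_trdeg (k A : Type u) [Field k] [CommRing A] [IsDomain A] [Algebra k A]
    [Algebra.FiniteType k A] :
    ringKrullDim A = ((Cardinal.toNat (Algebra.trdeg k A) : ℕ) : WithBot ℕ∞) := by
  obtain ⟨s, g, hg, hi⟩ := exists_integral_inj_algHom_of_fg k A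
  let : Algebra (MvPolynomial (Fin s) k) A := g.toRingHom.toAlgebra
  have hg' : Function.Injective (algebraMap (MvPolynomial (Fin s) k) A) := hg
  have : IsScalarTower k (MvPolynomial (Fin s) k) A :=
    IsScalarTower.of_algebraMap_eq fun x => (g.commutes x).symm
  have : Algebra.IsIntegral (MvPolynomial (Fin s) k) A := ⟨hi⟩
  have := (faithfulSMul_iff_algebraMap_injective (MvPolynomial (Fin s) k) A).2 hg'
  have h1 := trdeg_add_eq k (MvPolynomial (Fin s) k) (A := A)
  rw [trdeg_eq_zero (R := MvPolynomial (Fin s) k), add_zero, MvPolynomial.trdeg_of_isDomain] at h1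
  rw [← h1, aux_dim_integral hg', MvPolynomial.ringKrullDim_of_isNoetherianRing]
  simp

theorem aux_topDim_le {X : Scheme.{u}} (c : WithBot ℕ∞)
    (h : ∀ x : X, ∃ (V : Scheme.{u}) (j : V ⟶ X), IsOpenImmersion j ∧ x ∈ Set.range j ∧
      topologicalKrullDim V ≤ c) : topologicalKrullDim X ≤ c := by
  have e (Y : Scheme.{u}) : topologicalKrullDim Y = Order.krullDim Y :=
    Order.krullDim_eq_of_orderIso irreducibleSetEquivPoints
  rw [e, Order.krullDim_eq_iSup_coheight]
  refine iSup_le fun x => ?_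
  obtain ⟨V, j, hj, ⟨y, rfl⟩, hV⟩ := h x
  rw [e] at hV
  refine le_trans ?_ hV
  have := coheight_eq_of_isOpenImmersion (x := y) j
  rw [Order.krullDim_eq_iSup_coheight]
  refine le_trans ?_ (le_iSup _ y)
  exact le_of_eq (congrArg _ this)

theorem aux_dim_affineOpen {k : Type u} [Field k] {W : Scheme.{u}} [IsIntegral W]
    (str : W ⟶ Spec (CommRingCat.of k)) [LocallyOfFiniteType str] :
    ∃ c : WithBot ℕ∞, ∀ V : W.Opens, IsAffineOpen V → Nonempty V →
      topologicalKrullDim V.toScheme = c := by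
  have : Nonempty (⊤ : W.Opens) := ⟨⟨genericPoint W, trivial⟩⟩
  let γ : ∀ V : W.Opens, k →+* Γ(W, V) := fun V =>
    ((Scheme.ΓSpecIso (CommRingCat.of k)).inv ≫ str.appLE ⊤ V le_top).hom
  let δ : k →+* W.functionField := (W.germToFunctionField ⊤).hom.comp (γ ⊤)
  let : Algebra k W.functionField := δ.toAlgebra
  refine ⟨((Cardinal.toNat (Algebra.trdeg k W.functionField) : ℕ) : WithBot ℕ∞),
    fun V hV hne => ?_⟩
  let : Algebra k Γ(W, V) := (γ V).toAlgebra
  have hft : Algebra.FiniteType k Γ(W, V) := by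
    have h1 : (str.appLE ⊤ V le_top).hom.FiniteType :=
      str.finiteType_appLE (isAffineOpen_top _) hV le_top
    have h2 : ((Scheme.ΓSpecIso (CommRingCat.of k)).inv).hom.FiniteType :=
      RingHom.FiniteType.of_surjective _
        (Scheme.ΓSpecIso (CommRingCat.of k)).symm.commRingCatIsoToRingEquiv.surjective
    exact RingHom.FiniteType.comp h1 h2
  have hst : IsScalarTower k Γ(W, V) W.functionField := by
    refine IsScalarTower.of_algebraMap_eq' ?_
    change (W.germToFunctionField ⊤).hom.comp (γ ⊤) = (W.germToFunctionField V).hom.comp (γ V)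
    have e : ((Scheme.ΓSpecIso (CommRingCat.of k)).inv ≫ str.appLE ⊤ ⊤ le_top) ≫
        W.germToFunctionField ⊤ =
        ((Scheme.ΓSpecIso (CommRingCat.of k)).inv ≫ str.appLE ⊤ V le_top) ≫
        W.germToFunctionField V := by
      rw [← Scheme.Hom.appLE_map (f := str) (e := le_top) (i := (homOfLE (le_top : V ≤ ⊤)).op)]
      simp only [Category.assoc]
      rw [TopCat.Presheaf.germ_res]
    exact congrArg CommRingCat.Hom.hom e
  have := functionField_isFractionRing_of_isAffineOpen W V hV
  have : FaithfulSMul Γ(W, V) W.functionField :=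
    (faithfulSMul_iff_algebraMap_injective _ _).2 (IsFractionRing.injective _ _)
  have halg : Algebra.IsAlgebraic Γ(W, V) W.functionField := 
    IsLocalization.isAlgebraic _ (nonZeroDivisors Γ(W, V)) 
  have h1 := trdeg_add_eq k Γ(W, V) (A := W.functionField)
  rw [trdeg_eq_zero (R := Γ(W, V)), add_zero] at h1
  rw [← h1, ← aux_dim_trdeg k Γ(W, V), ← PrimeSpectrum.topologicalKrullDim_eq_ringKrullDim]
  exact IsHomeomorph.topologicalKrullDim_eq _ (Scheme.homeoOfIso hV.isoSpec).isHomeomorph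

theorem aux_dim_open {k : Type u} [Field k] {U W : Scheme.{u}} [IsIntegral W]
    (str : W ⟶ Spec (CommRingCat.of k)) [LocallyOfFiniteType str]
    (j : U ⟶ W) [IsOpenImmersion j] [Nonempty U] :
    topologicalKrullDim U = topologicalKrullDim W := by
  obtain ⟨c, hc⟩ := aux_dim_affineOpen str
  apply le_antisymm j.isOpenEmbedding.isInducing.topologicalKrullDim_le
  have h1 : topologicalKrullDim W ≤ c := by
    refine aux_topDim_le c fun x => ?_
    obtain ⟨_, ⟨(A : Scheme.Opens _), hA, rfl⟩, hxA, hAU⟩ :=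
      W.isBasis_affineOpens.exists_subset_of_mem_open (Set.mem_univ x) isOpen_univ
    exact ⟨A.toScheme, A.ι, inferInstance, by simpa using hxA, (hc A hA ⟨⟨x, hxA⟩⟩).le⟩
  refine h1.trans ?_
  obtain ⟨y⟩ := ‹Nonempty U›
  obtain ⟨_, ⟨(A : Scheme.Opens _), hA, rfl⟩, hxA, hAU⟩ :=
      U.isBasis_affineOpens.exists_subset_of_mem_open (Set.mem_univ y) isOpen_univ
  have h2 := hc (j ''ᵁ A) (hA.image_of_isOpenImmersion j) ⟨⟨j y, ⟨y, hxA, rfl⟩⟩⟩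
  rw [← h2, ← IsHomeomorph.topologicalKrullDim_eq _
    (Scheme.homeoOfIso (j.isoImage A)).isHomeomorph]
  exact A.ι.isOpenEmbedding.isInducing.topologicalKrullDim_le

section AuxB

theorem aux_dim_succ {Y X : Type*} [TopologicalSpace Y] [TopologicalSpace X] [Nonempty Y]
    {f : Y → X} (hf : Topology.IsInducing f) {S T : Set X} (hS : IsClosed S) (hfS : Set.range f ⊆ S)
    (hST : S ⊆ T) (hne : S ≠ T) (hT : IsClosed T) (hTi : IsIrreducible T) :
    topologicalKrullDim Y + 1 ≤ topologicalKrullDim X := by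
  have : Nonempty (TopologicalSpace.IrreducibleCloseds Y) :=
    ⟨⟨closure {Classical.arbitrary Y}, isIrreducible_singleton.closure, isClosed_closure⟩⟩
  have hsub : ∀ c : TopologicalSpace.IrreducibleCloseds Y,
      ((TopologicalSpace.IrreducibleCloseds.map f hf.continuous c :
        TopologicalSpace.IrreducibleCloseds X) : Set X) ⊆ S := by
    intro c
    exact closure_minimal ((Set.image_subset_range _ _).trans hfS) hS
  unfold topologicalKrullDim
  rw [← Order.krullDim_WithTop]
  let T' : TopologicalSpace.IrreducibleCloseds X := ⟨T, hTi, hT⟩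
  let g : WithTop (TopologicalSpace.IrreducibleCloseds Y) →
    TopologicalSpace.IrreducibleCloseds X := fun c => match c with
    | some c => TopologicalSpace.IrreducibleCloseds.map f hf.continuous c
    | none => T'
  refine Order.krullDim_le_of_strictMono g ?_
  intro a b hab
  cases a with
  | top => exact absurd hab not_top_lt
  | coe a =>
    cases b with
    | top =>
      refine lt_of_le_of_ne ((hsub a).trans hST) ?_
      intro h
      apply hne
      apply Set.Subset.antisymm hST
      have h2 : T ⊆ ((TopologicalSpace.IrreducibleCloseds.map f hf.continuous a :
        TopologicalSpace.IrreducibleCloseds X) : Set X) := h.ge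
      exact h2.trans (hsub a)
    | coe b =>
      exact TopologicalSpace.IrreducibleCloseds.map_strictMono_of_isInducing hf
        (WithTop.coe_lt_coe.1 hab)


variable {k : Type u} [Field k]

theorem aux_noeth (X : Variety k) : IsNoetherian X.toScheme := by
  have := X.locallyOfFiniteType
  have := X.quasiCompact
  have : IsLocallyNoetherian X.toScheme := LocallyOfFiniteType.isLocallyNoetherian X.str
  have : CompactSpace X.toScheme := by
    have := QuasiCompact.isCompact_preimage (f := X.str) Set.univ isOpen_univ isCompact_univ
    exact ⟨by simpa using this⟩
  exact {}

/-- variety structure on an open piece -/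
def auxOpen (X : Variety k) {Y : Scheme.{u}} (j : Y ⟶ X.toScheme) [IsOpenImmersion j] :
    Variety k where
  toScheme := Y
  str := j ≫ X.str
  reduced := by
    have := X.reduced
    exact isReduced_of_isOpenImmersion j
  separated := by
    have := X.separated
    infer_instance
  locallyOfFiniteType := by
    have := X.locallyOfFiniteType
    infer_instance
  quasiCompact := by
    have := aux_noeth X
    have : TopologicalSpace.NoetherianSpace Y :=
      j.isOpenEmbedding.isInducing.noetherianSpace
    infer_instance

/-- variety structure on a closed piece -/
def auxClosed (X : Variety k) {Y : Scheme.{u}} (j : Y ⟶ X.toScheme) [IsClosedImmersion j]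
    [IsReduced Y] : Variety k where
  toScheme := Y
  str := j ≫ X.str
  reduced := inferInstance
  separated := by
    have := X.separated
    infer_instance
  locallyOfFiniteType := by
    have := X.locallyOfFiniteType
    infer_instance
  quasiCompact := by
    have := X.quasiCompact
    infer_instance

theorem aux_reduced_closed (X : Scheme.{u}) (Z : Set X) (hZ : IsClosed Z) :
    ∃ (Y : Scheme.{u}) (i : Y ⟶ X), IsReduced Y ∧ IsClosedImmersion i ∧ Set.range i = Z := by
  let I := Scheme.IdealSheafData.vanishingIdeal (X := X) ⟨Z, hZ⟩
  refine ⟨I.subscheme, I.subschemeι, ?_, inferInstance, ?_⟩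
  · have : ∀ i, IsReduced (I.subschemeCover.openCover.X i) := by
      intro U
      change IsReduced (Spec _)
      have : _root_.IsReduced (Γ(X, (U : X.affineOpens).1) ⧸ I.ideal U) := by
        rw [← Ideal.isRadical_iff_quotient_reduced]
        simp only [I]
        exact PrimeSpectrum.isRadical_vanishingIdeal _
      exact inferInstanceAs (IsReduced (Spec (CommRingCat.of (Γ(X, (U : X.affineOpens).1) ⧸ I.ideal U))))
    exact IsReduced.of_openCover _ I.subschemeCover.openCover
  · rw [Scheme.IdealSheafData.range_subschemeι]
    simp [I]


end AuxB

section AuxC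
variable {k : Type u} [Field k]

theorem aux_integral (W : Variety k) (h : IrreducibleSpace W.toScheme) : IsIntegral W.toScheme := by
  have := W.reduced
  exact isIntegral_of_irreducibleSpace_of_isReduced _

theorem aux_birEquiv {V : Scheme.{u}} [Nonempty V] (W W' : Variety k) (a : V ⟶ W.toScheme)
    (b : V ⟶ W'.toScheme) [IsOpenImmersion a] [IsOpenImmersion b] (h : a ≫ W.str = b ≫ W'.str)
    (hW : IrreducibleSpace W.toScheme) (hW' : IrreducibleSpace W'.toScheme) : BirEquiv W W' := by
  refine ⟨a.opensRange, b.opensRange, ?_, ?_, a.isoOpensRange.symm ≪≫ b.isoOpensRange, ?_⟩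
  · exact a.opensRange.isOpen.dense ⟨a (Classical.arbitrary V), _, rfl⟩
  · exact b.opensRange.isOpen.dense ⟨b (Classical.arbitrary V), _, rfl⟩
  · have h1 : b.isoOpensRange.hom ≫ b.opensRange.ι = b := IsOpenImmersion.isoOfRangeEq_hom_fac _ _ _
    have h2 : a.isoOpensRange.inv ≫ a = a.opensRange.ι := IsOpenImmersion.isoOfRangeEq_inv_fac _ _ _
    simp only [Iso.trans_hom, Iso.symm_hom, Category.assoc]
    rw [reassoc_of% h1, ← h, reassoc_of% h2]

theorem aux_dim_open' {V : Scheme.{u}} [Nonempty V] (W : Variety k) (a : V ⟶ W.toScheme)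
    [IsOpenImmersion a] (hW : IrreducibleSpace W.toScheme) :
    topologicalKrullDim V = W.dim := by
  have := aux_integral W hW
  have := W.locallyOfFiniteType
  exact aux_dim_open W.str a

open Classical in
/-- basis element of an irreducible variety of dimension n, else zero -/
def auxBeta (n : ℕ) (W : Variety k) : BirClass k n →₀ ℤ :=
  if h : IrreducibleSpace W.toScheme ∧ W.dim = (n : WithBot ℕ∞) then
    Finsupp.single (Quot.mk _ ⟨W, h⟩) 1 else 0

theorem auxBeta_eq (n : ℕ) {V : Scheme.{u}} [Nonempty V] (W W' : Variety k) (a : V ⟶ W.toScheme)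
    (b : V ⟶ W'.toScheme) [IsOpenImmersion a] [IsOpenImmersion b] (h : a ≫ W.str = b ≫ W'.str)
    (hW : IrreducibleSpace W.toScheme) (hW' : IrreducibleSpace W'.toScheme) :
    auxBeta n W = auxBeta n W' := by
  have hd : W.dim = W'.dim := by
    rw [← aux_dim_open' W a hW, ← aux_dim_open' W' b hW']
  unfold auxBeta
  by_cases hn : W'.dim = n
  · rw [dif_pos ⟨hW, hd.trans hn⟩, dif_pos ⟨hW', hn⟩]
    congr 1
    exact Quot.sound (aux_birEquiv W W' a b h hW hW')
  · rw [dif_neg (fun h => hn (hd.symm.trans h.2)), dif_neg (fun h => hn h.2)]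

/-- W is an irreducible open piece of X with generic point x -/
def auxNb (X W : Variety k) (x : X.toScheme) : Prop :=
  ∃ j : W.toScheme ⟶ X.toScheme, IsOpenImmersion j ∧ j ≫ X.str = W.str ∧
    IrreducibleSpace W.toScheme ∧ ∃ w : W.toScheme, j w = x ∧ ∀ w' : W.toScheme, w ⤳ w'

open Classical in
/-- local contribution of a point -/
def auxGamma (n : ℕ) (X : Variety k) (x : X.toScheme) : BirClass k n →₀ ℤ :=
  if h : ∃ W, auxNb X W x then auxBeta n h.choose else 0

theorem auxNb_beta (n : ℕ) (X W W' : Variety k) (x : X.toScheme) (h : auxNb X W x)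
    (h' : auxNb X W' x) : auxBeta n W = auxBeta n W' := by
  obtain ⟨j, hj, hjs, hW, w, hw, -⟩ := h
  obtain ⟨j', hj', hjs', hW', w', hw', -⟩ := h'
  obtain ⟨z, -, -⟩ := Scheme.Pullback.exists_preimage_pullback (f := j) (g := j') w w'
    (hw.trans hw'.symm)
  have : Nonempty ↥(pullback j j') := ⟨z⟩
  refine auxBeta_eq n W W' (pullback.fst j j') (pullback.snd j j') ?_ hW hW'
  rw [← hjs, ← hjs', pullback.condition_assoc]

theorem auxGamma_eq (n : ℕ) (X W : Variety k) (x : X.toScheme) (h : auxNb X W x) :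
    auxGamma n X x = auxBeta n W := by
  have h' : ∃ W, auxNb X W x := ⟨W, h⟩
  unfold auxGamma
  rw [dif_pos h']
  exact auxNb_beta n X _ _ x h'.choose_spec h

theorem auxGamma_zero (n : ℕ) (X : Variety k) (x : X.toScheme) (h : ¬ ∃ W, auxNb X W x) :
    auxGamma n X x = 0 := by
  unfold auxGamma
  rw [dif_neg h]

/-- N4 -/
theorem auxNb_max (X W : Variety k) (x : X.toScheme) (h : auxNb X W x) (x' : X.toScheme)
    (hx : x' ⤳ x) : x' = x := by
  obtain ⟨j, hj, hjs, hW, w, rfl, hw⟩ := h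
  obtain ⟨w', rfl⟩ : x' ∈ Set.range j :=
    hx.mem_open (IsOpenImmersion.isOpen_range j) ⟨w, rfl⟩
  have h1 : j w ⤳ j w' := (hw w').map j.continuous
  exact (hx.antisymm h1).eq

theorem aux_max_component (X : Scheme.{u}) (x : X) (h : ∀ x', x' ⤳ x → x' = x) :
    closure {x} ∈ irreducibleComponents X := by
  refine ⟨isIrreducible_singleton.closure, ?_⟩
  intro T hT hxT
  have hc : IsIrreducible (closure T) := hT.closure
  have h1 := hc.isGenericPoint_genericPoint (isClosed_closure)
  have h2 : hc.genericPoint ⤳ x := by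
    rw [specializes_iff_mem_closure, h1.def]
    exact subset_closure (hxT (subset_closure rfl))
  rw [h _ h2] at h1
  rw [h1.def]
  exact subset_closure

theorem aux_irred_of_generic {T : Type*} [TopologicalSpace T] (w : T) (h : ∀ w' : T, w ⤳ w') :
    IrreducibleSpace T := by
  have : closure {w} = (Set.univ : Set T) := by
    ext w'
    simpa using specializes_iff_mem_closure.1 (h w')
  have h2 : IsIrreducible (Set.univ : Set T) := by
    rw [← this]; exact isIrreducible_singleton.closure
  exact (irreducibleSpace_def _).2 h2

/-- N3 -/
theorem auxNb_of_max (X : Variety k) (x : X.toScheme) (h : ∀ x', x' ⤳ x → x' = x) :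
    ∃ W, auxNb X W x := by
  have := aux_noeth X
  obtain ⟨o, ho, hne, hsub⟩ :=
    TopologicalSpace.NoetherianSpace.exists_isOpen_nonempty_subset_irreducibleComponent
      _ (aux_max_component X.toScheme x h)
  obtain ⟨U, hU⟩ : ∃ U : X.toScheme.Opens, (U : Set X.toScheme) = o := ⟨⟨o, ho⟩, rfl⟩
  have hx : x ∈ o := by
    obtain ⟨y, hy⟩ := hne
    exact (specializes_iff_mem_closure.2 (hsub hy)).mem_open ho hy
  obtain ⟨w, hw⟩ : x ∈ Set.range U.ι := by rw [Scheme.Opens.range_ι, hU]; exact hx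
  have hgen : ∀ w' : U.toScheme, w ⤳ w' := by
    intro w'
    rw [← U.ι.isOpenEmbedding.isInducing.specializes_iff, hw]
    refine specializes_iff_mem_closure.2 (hsub ?_)
    have : U.ι w' ∈ Set.range U.ι := ⟨w', rfl⟩
    rwa [Scheme.Opens.range_ι, hU] at this
  have hoi : IsOpenImmersion U.ι := inferInstance
  exact ⟨auxOpen X (Y := U.toScheme) U.ι, U.ι, hoi, rfl,
    aux_irred_of_generic w hgen, w, hw, hgen⟩

/-- N1 -/
theorem auxNb_comp (X U W : Variety k) (j : U.toScheme ⟶ X.toScheme) [IsOpenImmersion j]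
    (hj : j ≫ X.str = U.str) (u : U.toScheme) (h : auxNb U W u) : auxNb X W (j u) := by
  obtain ⟨g, hg, hgs, hW, w, rfl, hw⟩ := h
  refine ⟨g ≫ j, inferInstance, ?_, hW, w, by simp, hw⟩
  rw [Category.assoc, hj, hgs]

theorem auxGamma_open (n : ℕ) (X U : Variety k) (j : U.toScheme ⟶ X.toScheme) [IsOpenImmersion j]
    (hj : j ≫ X.str = U.str) (u : U.toScheme) : auxGamma n X (j u) = auxGamma n U u := by
  by_cases h : ∃ W, auxNb X W (j u)
  · have h2 : ∃ W, auxNb U W u := by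
      obtain ⟨W, hW⟩ := h
      refine auxNb_of_max U u fun x' hx' => ?_
      exact j.isOpenEmbedding.injective (auxNb_max X W _ hW _ (hx'.map j.continuous))
    obtain ⟨W, hW⟩ := h2
    rw [auxGamma_eq n U W u hW, auxGamma_eq n X W _ (auxNb_comp X U W j hj u hW)]
  · rw [auxGamma_zero n X _ h, auxGamma_zero]
    rintro ⟨W, hW⟩
    exact h ⟨W, auxNb_comp X U W j hj u hW⟩

/-- N2 -/
theorem auxGamma_closed (n : ℕ) (X Y : Variety k) (hX : X.dim ≤ n)
    (i : Y.toScheme ⟶ X.toScheme) [IsClosedImmersion i]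
    (hi : i ≫ X.str = Y.str) (y : Y.toScheme) :
    auxGamma n X (i y) = auxGamma n Y y := by
  by_cases h : ∃ W, auxNb X W (i y)
  · obtain ⟨W, hW⟩ := h
    rw [auxGamma_eq n X W _ hW, auxGamma_eq n Y W]
    obtain ⟨g, hg, hgs, hWi, w, hw, hgen⟩ := hW
    have hsub : ∀ w', g w' ∈ Set.range i := by
      intro w'
      have h1 : g w ⤳ g w' := (hgen w').map g.continuous
      rw [hw] at h1
      exact h1.mem_closed (i.isClosedEmbedding.isClosed_range) ⟨y, rfl⟩
    have hs : Surjective (pullback.snd i g) := by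
      constructor
      intro w'
      obtain ⟨y', hy'⟩ := hsub w'
      obtain ⟨z, -, hz⟩ := Scheme.Pullback.exists_preimage_pullback (f := i) (g := g) y' w' hy'
      exact ⟨z, hz⟩
    have := W.reduced
    have hiso : IsIso (pullback.snd i g) := isIso_of_isClosedImmersion_of_surjective _
    have hfac : (inv (pullback.snd i g) ≫ pullback.fst i g) ≫ i = g := by
      rw [Category.assoc, pullback.condition, IsIso.inv_hom_id_assoc]
    refine ⟨inv (pullback.snd i g) ≫ pullback.fst i g, inferInstance, ?_, hWi, w, ?_, hgen⟩
    · rw [← hi, ← hgs, ← Category.assoc, hfac]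
    · apply i.isClosedEmbedding.injective
      rw [← Scheme.Hom.comp_apply, hfac, hw]
  · rw [auxGamma_zero n X _ h]
    symm
    by_contra hne
    have h2 : ∃ W, auxNb Y W y := by
      by_contra h2
      exact hne (auxGamma_zero n Y y h2)
    obtain ⟨W, hW⟩ := h2
    rw [auxGamma_eq n Y W y hW] at hne
    have hd : W.dim = n := by
      by_contra hd
      apply hne
      unfold auxBeta
      rw [dif_neg (fun h => hd h.2)]
    apply h
    apply auxNb_of_max
    intro x' hx'
    by_contra hxx
    obtain ⟨g, hg, hgs, hWi, w, rfl, hgen⟩ := hW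
    have hind : Topology.IsInducing (g ≫ i) := by
      have h1 := i.isClosedEmbedding.isInducing.comp g.isOpenEmbedding.isInducing
      simpa using h1
    have := aux_dim_succ (Y := W.toScheme) (X := X.toScheme) (f := (g ≫ i))
      (S := closure {i (g w)}) (T := closure {x'}) hind isClosed_closure (by
        rintro _ ⟨w', rfl⟩
        exact specializes_iff_mem_closure.1 (by
          rw [← Scheme.Hom.comp_apply]
          exact (hgen w').map (g ≫ i).continuous))
      (by
        apply closure_minimal _ isClosed_closure
        rw [Set.singleton_subset_iff]
        exact specializes_iff_mem_closure.1 hx')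
      (by
        intro he
        apply hxx
        exact (hx'.antisymm (specializes_iff_mem_closure.2 (by rw [he]; exact subset_closure rfl))).eq)
      isClosed_closure isIrreducible_singleton.closure
    have h3 : W.dim + 1 ≤ (n : WithBot ℕ∞) := this.trans hX
    rw [hd] at h3
    have h4 : ((n + 1 : ℕ) : WithBot ℕ∞) ≤ (n : WithBot ℕ∞) := by exact_mod_cast h3
    have h5 : n + 1 ≤ n := by exact_mod_cast h4
    omega

end AuxC

section AuxE
variable {k : Type u} [Field k]

theorem auxGamma_ne (n : ℕ) (X : Variety k) (x : X.toScheme) (h : auxGamma n X x ≠ 0) :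
    ∃ W, auxNb X W x ∧ W.dim = n := by
  have h2 : ∃ W, auxNb X W x := by
    by_contra h2
    exact h (auxGamma_zero n X x h2)
  obtain ⟨W, hW⟩ := h2
  refine ⟨W, hW, ?_⟩
  rw [auxGamma_eq n X W x hW] at h
  by_contra hd
  apply h
  unfold auxBeta
  rw [dif_neg (fun h => hd h.2)]

theorem auxGamma_finite (n : ℕ) (X : Variety k) : (Function.support (auxGamma n X)).Finite := by
  have := aux_noeth X
  have hf : (irreducibleComponents X.toScheme).Finite :=
    TopologicalSpace.NoetherianSpace.finite_irreducibleComponents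
  refine Set.Finite.of_finite_image (f := fun x => closure {x}) (hf.subset ?_) ?_
  · rintro _ ⟨x, hx, rfl⟩
    obtain ⟨W, hW, -⟩ := auxGamma_ne n X x hx
    exact aux_max_component _ x (auxNb_max X W x hW)
  · intro x _ y _ hxy
    have hxy : closure {x} = closure {y} := hxy
    have h1 : x ⤳ y := specializes_iff_mem_closure.2 (by rw [hxy]; exact subset_closure rfl)
    have h2 : y ⤳ x := specializes_iff_mem_closure.2 (by rw [← hxy]; exact subset_closure rfl)
    exact (h1.antisymm h2).eq

/-- total contribution -/
def auxPhi (n : ℕ) (X : Variety k) : BirClass k n →₀ ℤ := ∑ᶠ x, auxGamma n X x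

theorem auxPhi_add (n : ℕ) (X Y U : Variety k) (hX : X.dim ≤ n)
    (i : Y.toScheme ⟶ X.toScheme) (j : U.toScheme ⟶ X.toScheme) [IsClosedImmersion i]
    [IsOpenImmersion j] (hi : i ≫ X.str = Y.str) (hj : j ≫ X.str = U.str)
    (h : Set.range j = (Set.range i)ᶜ) : auxPhi n X = auxPhi n Y + auxPhi n U := by
  unfold auxPhi
  have h1 : ∑ᶠ y, auxGamma n Y y = ∑ᶠ x ∈ Set.range i, auxGamma n X x := by
    rw [finsum_mem_range i.isClosedEmbedding.injective]
    exact finsum_congr fun y => (auxGamma_closed n X Y hX i hi y).symm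
  have h2 : ∑ᶠ y, auxGamma n U y = ∑ᶠ x ∈ Set.range j, auxGamma n X x := by
    rw [finsum_mem_range j.isOpenEmbedding.injective]
    exact finsum_congr fun y => (auxGamma_open n X U j hj y).symm
  rw [h1, h2, ← finsum_mem_union' ?_ ?_ ?_, h, Set.union_compl_self, finsum_mem_univ]
  · rw [h]; exact disjoint_compl_right
  · exact (auxGamma_finite n X).subset Set.inter_subset_right
  · exact (auxGamma_finite n X).subset Set.inter_subset_right

theorem auxPhi_iso (n : ℕ) (X Y : Variety k) (e : X.toScheme ≅ Y.toScheme)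
    (he : e.hom ≫ Y.str = X.str) : auxPhi n X = auxPhi n Y := by
  unfold auxPhi
  have hinj := e.hom.isOpenEmbedding.injective
  have hs : Set.range e.hom = Set.univ := Set.range_eq_univ.2 e.hom.surjective
  rw [← finsum_mem_univ (f := auxGamma n Y), ← hs, finsum_mem_range hinj]
  exact finsum_congr fun x => (auxGamma_open n Y X e.hom he x).symm

theorem auxPhi_zero (n : ℕ) (X : Variety k) (hX : X.dim < n) : auxPhi n X = 0 := by
  unfold auxPhi
  apply finsum_eq_zero_of_forall_eq_zero
  intro x
  by_contra h
  obtain ⟨W, ⟨j, hj, -⟩, hd⟩ := auxGamma_ne n X x h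
  have h1 : W.dim ≤ X.dim := j.isOpenEmbedding.isInducing.topologicalKrullDim_le
  rw [hd] at h1
  exact absurd h1 (not_le.2 hX)

/-- Phi of an irreducible variety -/
theorem auxPhi_irred (n : ℕ) (X : Variety k) (hX : IrreducibleSpace X.toScheme)
    (hd : X.dim = n) : auxPhi n X = Finsupp.single (Quot.mk _ ⟨X, hX, hd⟩ : BirClass k n) 1 := by
  have hg : ∀ x, genericPoint X.toScheme ⤳ x := genericPoint_specializes
  have hNb : auxNb X X (genericPoint X.toScheme) :=
    ⟨𝟙 _, inferInstance, by simp, hX, _, by simp, hg⟩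
  unfold auxPhi
  rw [finsum_eq_single _ (genericPoint X.toScheme), auxGamma_eq n X X _ hNb]
  · unfold auxBeta
    rw [dif_pos ⟨hX, hd⟩]
    rfl
  · intro x hx
    by_contra h
    obtain ⟨W, hW, -⟩ := auxGamma_ne n X x h
    exact hx (auxNb_max X W x hW _ (hg x)).symm

/-- the hom on K0 -/
def auxHom (k : Type u) [Field k] (n : ℕ) : K0graded k n →+ (BirClass k n →₀ ℤ) :=
  QuotientAddGroup.lift _ (FreeAbelianGroup.lift (fun V => auxPhi n V.1)) (by
    rw [AddSubgroup.closure_le]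
    rintro a ((⟨X, Y, ⟨e, he⟩, rfl⟩ | ⟨X, Y, U, i, j, hi, hj, hi', hj', hr, rfl⟩) | ⟨X, hX, rfl⟩)
    · simp only [SetLike.mem_coe, AddMonoidHom.mem_ker, map_sub, FreeAbelianGroup.lift_apply_of]
      rw [auxPhi_iso n X.1 Y.1 e he, sub_self]
    · simp only [SetLike.mem_coe, AddMonoidHom.mem_ker, map_sub, FreeAbelianGroup.lift_apply_of]
      rw [auxPhi_add n X.1 Y.1 U.1 X.2 i j hi' hj' hr]
      abel
    · simp only [SetLike.mem_coe, AddMonoidHom.mem_ker, FreeAbelianGroup.lift_apply_of]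
      exact auxPhi_zero n X.1 hX)

theorem auxHom_cls (n : ℕ) (X : Variety k) (hX : X.dim ≤ n) :
    auxHom k n (K0graded.cls n X hX) = auxPhi n X := by
  unfold auxHom K0graded.cls
  erw [QuotientAddGroup.lift_mk]
  rw [FreeAbelianGroup.lift_apply_of]

theorem cls_zero (n : ℕ) (X : Variety k) (hX : X.dim ≤ n) (h : X.dim < n) :
    K0graded.cls n X hX = 0 := by
  refine (QuotientAddGroup.eq_zero_iff _).2 (AddSubgroup.subset_closure (Or.inr ?_))
  exact ⟨⟨X, hX⟩, h, rfl⟩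

theorem cls_iso (n : ℕ) (X Y : Variety k) (hX : X.dim ≤ n) (hY : Y.dim ≤ n)
    (e : X.toScheme ≅ Y.toScheme) (he : e.hom ≫ Y.str = X.str) :
    K0graded.cls n X hX = K0graded.cls n Y hY := by
  rw [← sub_eq_zero]
  refine (QuotientAddGroup.eq_zero_iff (FreeAbelianGroup.of _ - FreeAbelianGroup.of _)).2
    (AddSubgroup.subset_closure (Or.inl (Or.inl ?_)))
  exact ⟨⟨X, hX⟩, ⟨Y, hY⟩, ⟨e, he⟩, rfl⟩

theorem cls_add (n : ℕ) (X Y U : Variety k) (hX : X.dim ≤ n) (hY : Y.dim ≤ n) (hU : U.dim ≤ n)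
    (i : Y.toScheme ⟶ X.toScheme) (j : U.toScheme ⟶ X.toScheme) [IsClosedImmersion i]
    [IsOpenImmersion j] (hi : i ≫ X.str = Y.str) (hj : j ≫ X.str = U.str)
    (h : Set.range j = (Set.range i)ᶜ) :
    K0graded.cls n X hX = K0graded.cls n Y hY + K0graded.cls n U hU := by
  rw [← sub_eq_zero, ← sub_sub]
  refine (QuotientAddGroup.eq_zero_iff
    (FreeAbelianGroup.of _ - FreeAbelianGroup.of _ - FreeAbelianGroup.of _)).2
    (AddSubgroup.subset_closure (Or.inl (Or.inr ?_)))
  exact ⟨⟨X, hX⟩, ⟨Y, hY⟩, ⟨U, hU⟩, i, j, inferInstance, inferInstance, hi, hj, h, rfl⟩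

theorem aux_compl (X U : Variety k) (j : U.toScheme ⟶ X.toScheme) [IsOpenImmersion j] :
    ∃ (Y : Variety k) (i : Y.toScheme ⟶ X.toScheme), IsClosedImmersion i ∧ i ≫ X.str = Y.str ∧
      Set.range j = (Set.range i)ᶜ := by
  obtain ⟨Y, i, hY, hi, hr⟩ := aux_reduced_closed X.toScheme (Set.range j)ᶜ
    (IsOpenImmersion.isOpen_range j).isClosed_compl
  have hr' : Set.range j = (Set.range i)ᶜ := by rw [hr, compl_compl]
  exact ⟨auxClosed X i, i, hi, rfl, hr'⟩

theorem aux_dim_le_open (X U : Variety k) (j : U.toScheme ⟶ X.toScheme) [IsOpenImmersion j] :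
    U.dim ≤ X.dim := j.isOpenEmbedding.isInducing.topologicalKrullDim_le

theorem aux_dim_le_closed (X U : Variety k) (j : U.toScheme ⟶ X.toScheme) [IsClosedImmersion j] :
    U.dim ≤ X.dim := j.isClosedEmbedding.isInducing.topologicalKrullDim_le

theorem aux_dim_empty (X : Variety k) (h : IsEmpty X.toScheme) (n : ℕ) : X.dim < n := by
  have : IsEmpty (TopologicalSpace.IrreducibleCloseds X.toScheme) :=
    ⟨fun c => c.2.nonempty.elim fun x _ => h.elim x⟩
  have h1 : X.dim = ⊥ := Order.krullDim_eq_bot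
  rw [h1]
  exact WithBot.bot_lt_coe _

theorem cls_open (n : ℕ) (X U : Variety k) (hX : X.dim ≤ n) (hU : U.dim ≤ n)
    (hXi : IrreducibleSpace X.toScheme) (hne : Nonempty U.toScheme)
    (j : U.toScheme ⟶ X.toScheme) [IsOpenImmersion j] (hj : j ≫ X.str = U.str) :
    K0graded.cls n X hX = K0graded.cls n U hU := by
  obtain ⟨Y, i, hi, his, hr⟩ := aux_compl X U j
  have hY : Y.dim ≤ n := (aux_dim_le_closed X Y i).trans hX
  rw [cls_add n X Y U hX hY hU i j his hj hr, cls_zero n Y hY, zero_add]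
  rcases isEmpty_or_nonempty Y.toScheme with h | h
  · exact aux_dim_empty Y h n
  · have h1 := aux_dim_succ (f := i) i.isClosedEmbedding.isInducing (T := Set.univ)
      i.isClosedEmbedding.isClosed_range subset_rfl (Set.subset_univ _) (by
        intro h2
        rw [h2, Set.compl_univ, Set.range_eq_empty_iff] at hr
        exact hr.elim hne.some) isClosed_univ ((irreducibleSpace_def _).1 hXi)
    have h3 : Y.dim + 1 ≤ n := h1.trans hX
    have hlt : ∀ a : WithBot ℕ∞, a + 1 ≤ n → a < n := by
      intro a ha
      induction a with
      | bot => exact WithBot.bot_lt_coe _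
      | coe a =>
        have h4 : ((a + 1 : ℕ∞) : WithBot ℕ∞) ≤ ((n : ℕ∞) : WithBot ℕ∞) := by exact_mod_cast ha
        have h5 : a + 1 ≤ (n : ℕ∞) := WithBot.coe_le_coe.1 h4
        have h6 : a < (n : ℕ∞) := by
          have hfin : a ≠ ⊤ := by
            rintro rfl
            simp at h5
          exact (ENat.add_one_le_iff hfin).1 h5
        exact WithBot.coe_lt_coe.2 h6
    exact hlt _ h3

theorem cls_bir (n : ℕ) (X Y : Variety k) (hX : X.dim ≤ n) (hY : Y.dim ≤ n)
    (hXi : IrreducibleSpace X.toScheme) (hYi : IrreducibleSpace Y.toScheme) (h : BirEquiv X Y) :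
    K0graded.cls n X hX = K0graded.cls n Y hY := by
  obtain ⟨U, V, hU, hV, e, he⟩ := h
  have hU' : (auxOpen X U.ι).dim ≤ n := by
    have hoi : IsOpenImmersion U.ι := inferInstance
    exact (@aux_dim_le_open _ _ X (auxOpen X U.ι) U.ι hoi).trans hX
  have hV' : (auxOpen Y V.ι).dim ≤ n := by
    have hoi : IsOpenImmersion V.ι := inferInstance
    exact (@aux_dim_le_open _ _ Y (auxOpen Y V.ι) V.ι hoi).trans hY
  have hoU : IsOpenImmersion U.ι := inferInstance
  have hoV : IsOpenImmersion V.ι := inferInstance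
  have hneU : Nonempty U := hU.nonempty.to_subtype
  have hneV : Nonempty V := hV.nonempty.to_subtype
  rw [@cls_open _ _ n X (auxOpen X U.ι) hX hU' hXi hneU U.ι hoU rfl,
    @cls_open _ _ n Y (auxOpen Y V.ι) hY hV' hYi hneV V.ι hoV rfl]
  exact cls_iso n _ _ _ _ e he

/-- inverse -/
def auxInv (k : Type u) [Field k] (n : ℕ) : (BirClass k n →₀ ℤ) →+ K0graded k n :=
  Finsupp.liftAddHom (fun b => zmultiplesHom _ (Quot.lift
    (fun X : {V : Variety k // IrreducibleSpace V.toScheme ∧ V.dim = (n : WithBot ℕ∞)} =>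
      K0graded.cls n X.1 X.2.2.le)
    (fun X Y h => cls_bir n X.1 Y.1 X.2.2.le Y.2.2.le X.2.1 Y.2.1 h) b))

theorem auxInv_single (n : ℕ) (X : Variety k) (h : IrreducibleSpace X.toScheme ∧ X.dim = n) :
    auxInv k n (Finsupp.single (Quot.mk _ ⟨X, h⟩ : BirClass k n) 1) = K0graded.cls n X h.2.le := by
  unfold auxInv
  refine (Finsupp.liftAddHom_apply_single _ _ _).trans ?_
  exact one_zsmul _

theorem auxHom_inv (n : ℕ) (x : BirClass k n →₀ ℤ) : auxHom k n (auxInv k n x) = x := by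
  have : (auxHom k n).comp (auxInv k n) = AddMonoidHom.id _ := by
    apply Finsupp.addHom_ext'
    rintro ⟨X, hX⟩
    ext1
    simp only [AddMonoidHom.comp_apply, AddMonoidHom.id_apply]
    erw [auxInv_single n X hX, auxHom_cls, auxPhi_irred n X hX.1 hX.2]
    rfl
  exact DFunLike.congr_fun this x

theorem cls_mem_range (n : ℕ) (X : Variety k) (hX : X.dim ≤ n) :
    K0graded.cls n X hX ∈ (auxInv k n).range := by
  have := aux_noeth X
  have key : ∀ Z : TopologicalSpace.Closeds X.toScheme, ∀ (Y : Variety k)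
      (i : Y.toScheme ⟶ X.toScheme) (hi : IsClosedImmersion i) (hY : Y.dim ≤ n),
      Set.range i = Z → K0graded.cls n Y hY ∈ (auxInv k n).range := by
    intro Z
    induction Z using WellFoundedLT.induction with
    | ind Z ih =>
    intro Y i hi hY hr
    rcases isEmpty_or_nonempty Y.toScheme with h | h
    · rw [cls_zero n Y hY (aux_dim_empty Y h n)]
      exact zero_mem _
    · obtain ⟨y0⟩ := h
      let y := (isIrreducible_irreducibleComponent (x := y0)).genericPoint
      have hy : IsGenericPoint y (irreducibleComponent y0) := by
        have := (isIrreducible_irreducibleComponent (x := y0)).isGenericPoint_genericPoint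
          isClosed_irreducibleComponent
        exact this
      obtain ⟨W, j, hj, hjs, hWi, w, hw, -⟩ := auxNb_of_max Y y (by
        intro x' hx'
        have h1 : closure {y} ⊆ closure {x'} := by
          apply closure_minimal _ isClosed_closure
          rw [Set.singleton_subset_iff]
          exact specializes_iff_mem_closure.1 hx'
        rw [hy.def] at h1
        have h2 := (irreducibleComponent_mem_irreducibleComponents y0).2
          (isIrreducible_singleton.closure) h1
        have h3 : y ⤳ x' := specializes_iff_mem_closure.2 (by
          rw [hy.def]; exact h2 (subset_closure rfl))
        exact (hx'.antisymm h3).eq)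
      obtain ⟨Y', i', hi', his', hr'⟩ := aux_compl Y W j
      have hY' : Y'.dim ≤ n := (aux_dim_le_closed Y Y' i').trans hY
      have hW : W.dim ≤ n := (aux_dim_le_open Y W j).trans hY
      rw [cls_add n Y Y' W hY hY' hW i' j his' hjs hr']
      refine add_mem ?_ ?_
      · refine ih ⟨Set.range (i' ≫ i), (i' ≫ i).isClosedEmbedding.isClosed_range⟩ ?_ Y' (i' ≫ i)
          inferInstance hY' rfl
        refine lt_of_le_of_ne ?_ ?_
        · rintro _ ⟨z, rfl⟩
          change _ ∈ (Z : Set X.toScheme)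
          rw [← hr]
          exact ⟨i' z, by simp⟩
        · intro he
          have h1 : i (j w) ∈ (Z : Set X.toScheme) := by rw [← hr]; exact ⟨_, rfl⟩
          rw [← he] at h1
          obtain ⟨z, hz⟩ := h1
          rw [Scheme.Hom.comp_apply] at hz
          have h2 : i' z = j w := i.isClosedEmbedding.injective hz
          have h3 : j w ∈ (Set.range i')ᶜ := by rw [← hr']; exact ⟨w, rfl⟩
          exact h3 ⟨z, h2⟩
      · by_cases hd : W.dim = n
        · exact ⟨_, auxInv_single n W ⟨hWi, hd⟩⟩
        · rw [cls_zero n W hW (lt_of_le_of_ne hW hd)]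
          exact zero_mem _
  exact key ⊤ X (𝟙 _) inferInstance hX (by simp)

theorem auxInv_surj (n : ℕ) : Function.Surjective (auxInv k n) := by
  rw [← AddMonoidHom.range_eq_top, eq_top_iff]
  rintro x -
  obtain ⟨a, rfl⟩ := QuotientAddGroup.mk_surjective x
  induction a using FreeAbelianGroup.induction_on with
  | zero => exact zero_mem _
  | of X => exact cls_mem_range n X.1 X.2
  | neg X h => exact neg_mem h
  | add a b ha hb => exact add_mem ha hb

/-- the isomorphism -/
def auxIso (k : Type u) [Field k] (n : ℕ) : K0graded k n ≃+ (BirClass k n →₀ ℤ) :=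
  { auxHom k n with
    invFun := auxInv k n
    left_inv := by
      intro x
      obtain ⟨y, rfl⟩ := auxInv_surj n x
      exact congrArg _ (auxHom_inv n y)
    right_inv := auxHom_inv n }

end AuxE

section AuxF
variable {k : Type u} [Field k]

theorem aux_closure_inj {X : Scheme.{u}} {x y : X} (hxy : closure {x} = closure {y}) : x = y := by
  have h1 : x ⤳ y := specializes_iff_mem_closure.2 (by rw [hxy]; exact subset_closure rfl)
  have h2 : y ⤳ x := specializes_iff_mem_closure.2 (by rw [← hxy]; exact subset_closure rfl)
  exact (h1.antisymm h2).eq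

theorem auxPhi_realizes (n : ℕ) (X : Variety k) (hX : X.dim ≤ (n : WithBot ℕ∞)) (m : ℕ)
    (C : Fin m → Variety k) (f : ∀ i, (C i).toScheme ⟶ X.toScheme)
    (hC : ∀ i, IrreducibleSpace (C i).toScheme ∧ (C i).dim = (n : WithBot ℕ∞))
    (hR : RealizesComponents n X m C f) :
    auxPhi n X = ∑ i, Finsupp.single (Quot.mk _ ⟨C i, hC i⟩ : BirClass k n) (1 : ℤ) := by
  obtain ⟨hcl, hstr, hinj, hset⟩ := hR
  have hirr : ∀ i, IrreducibleSpace (C i).toScheme := fun i => (hC i).1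
  let xs : Fin m → X.toScheme := fun i => f i (genericPoint (C i).toScheme)
  have hxs : ∀ i, Set.range (f i) = closure {xs i} := by
    intro i
    have h1 := (f i).isClosedEmbedding.isClosedMap.closure_image_eq_of_continuous
      (f i).continuous {genericPoint (C i).toScheme}
    rw [Set.image_singleton, genericPoint_closure, Set.image_univ] at h1
    exact h1.symm
  have hxinj : Function.Injective xs := by
    intro i j hij
    apply hinj
    change Set.range (f i) = Set.range (f j)
    rw [hxs, hxs, hij]
  have hgam : ∀ i, auxGamma n X (xs i) =
      Finsupp.single (Quot.mk _ ⟨C i, hC i⟩ : BirClass k n) (1 : ℤ) := by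
    intro i
    have := hcl i
    have h1 : auxGamma n X (xs i) = auxGamma n (C i) (genericPoint (C i).toScheme) :=
      auxGamma_closed n X (C i) hX (f i) (hstr i) _
    rw [h1, auxGamma_eq n (C i) (C i) _ ⟨𝟙 _, inferInstance, by simp, hirr i, _, by simp,
      genericPoint_specializes⟩]
    unfold auxBeta
    rw [dif_pos (hC i)]
    rfl
  have hsupp : Function.support (auxGamma n X) ⊆ Set.range xs := by
    intro x hx
    obtain ⟨W, hW, hd⟩ := auxGamma_ne n X x hx
    have hcomp := aux_max_component _ x (auxNb_max X W x hW)
    have hdim : topologicalKrullDim (closure {x} : Set X.toScheme) = (n : WithBot ℕ∞) := by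
      apply le_antisymm
      · exact (Topology.IsInducing.subtypeVal.topologicalKrullDim_le).trans hX
      · obtain ⟨g, hg, -, -, w, rfl, hgen⟩ := hW
        rw [← hd]
        have hmem : ∀ w', g w' ∈ closure {g w} := fun w' =>
          specializes_iff_mem_closure.1 ((hgen w').map g.continuous)
        have hind : Topology.IsInducing (Set.codRestrict g (closure {g w}) hmem) :=
          g.isOpenEmbedding.isInducing.codRestrict hmem
        exact hind.topologicalKrullDim_le
    have hmem : closure {x} ∈ {S | S ∈ irreducibleComponents X.toScheme ∧
      topologicalKrullDim S = (n : WithBot ℕ∞)} := ⟨hcomp, hdim⟩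
    rw [← hset] at hmem
    obtain ⟨i, hi⟩ := hmem
    refine ⟨i, aux_closure_inj ?_⟩
    rw [← hxs i]
    exact hi
  have h1 : auxPhi n X = ∑ᶠ x ∈ Set.range xs, auxGamma n X x := by
    unfold auxPhi
    rw [finsum_mem_inter_support_eq (auxGamma n X) (Set.range xs) Set.univ
      (by rw [Set.univ_inter, Set.inter_eq_right.2 hsupp]), finsum_mem_univ]
  rw [h1, finsum_mem_range hxinj, finsum_eq_sum_of_fintype]
  exact Finset.sum_congr rfl fun i _ => hgam i


end AuxF

/-- `K_0(V_k^{(n,n-1)})` is a free abelian group with one basis element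
for each birational class in `B_n`: there is an isomorphism with `⨁_{B_n} ℤ` sending the
class of a variety `X` of dimension at most `n` to the sum, over the `n`-dimensional
irreducible components of `X`, of the basis elements of their birational classes. -/
theorem K0graded_free_on_birClasses (k : Type u) [Field k] (n : ℕ) :
    ∃ iso : K0graded k n ≃+ (BirClass k n →₀ ℤ),
      ∀ (X : Variety k) (hX : X.dim ≤ (n : WithBot ℕ∞)) (m : ℕ)
        (C : Fin m → Variety k) (f : ∀ i, (C i).toScheme ⟶ X.toScheme)
        (hC : ∀ i, IrreducibleSpace (C i).toScheme ∧ (C i).dim = (n : WithBot ℕ∞)),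
        RealizesComponents n X m C f →
        iso (K0graded.cls n X hX) =
          ∑ i, Finsupp.single (Quot.mk _ ⟨C i, hC i⟩ : BirClass k n) (1 : ℤ) := by
  refine ⟨auxIso k n, fun X hX m C f hC hR => ?_⟩
  exact (auxHom_cls n X hX).trans (auxPhi_realizes n X hX m C f hC hR)
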